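/- (The Bessel inequality, eq. (bessel-ineq), in integral form.) For every real z > 0, one has (∫_{−1}^{1} e^{zt}·(1 − t²)^{−1/2} dt)² > (z² + 4) · (∫_{−1}^{1} e^{zt}·√(1 − t²) dt)², i.e. B₀(z)² > (z² + 4)·B₁(z)². Via the Poisson representations I₀(z) = B₀(z)/π and I₁(z) = z·B₁(z)/π, this is exactly the inequality (I₀(z)/I₁(z))² > 1 + 4/z² for all z > 0. -/

import Mathlib

open intervalIntegral

/-- `B₀(z) = ∫_{−1}^{1} e^{zt} (1 − t²)^{−1/2} dt`, so that `I₀(z) = B₀(z)/π`. -/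
noncomputable def B0 (z : ℝ) : ℝ :=
  ∫ t in (-1 : ℝ)..1, Real.exp (z * t) * (1 - t ^ 2) ^ (-(1 / 2) : ℝ)

/-- `B₁(z) = ∫_{−1}^{1} e^{zt} √(1 − t²) dt`, so that `I₁(z) = z·B₁(z)/π`. -/
noncomputable def B1 (z : ℝ) : ℝ :=
  ∫ t in (-1 : ℝ)..1, Real.exp (z * t) * Real.sqrt (1 - t ^ 2)

/-!
Substituting `t = cos θ` gives `B₀ = S₀` and `B₁ = S₂`, where
`S_p(z) = ∫_0^π e^{z cos θ} sin^p θ dθ`. Integration by parts yields `S_p' = z S_{p+2} / (p + 1)`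
and `(p + 1) S_p = (p + 2) S_{p+2} + z² S_{p+4} / (p + 3)`. Differentiating the gap
`((p + 1) S_p)² - (z² + (p + 2)²) S_{p+2}²` and applying the recurrence at `p`, then at `p + 2`,
leaves `z` times a quantity which is positive for `z ≠ 0` when `p ≥ 0`; the recurrence at `z = 0`
says that the gap vanishes there, so it is positive elsewhere.
-/

open Real Set MeasureTheory
open scoped Interval

theorem hasDerivAt_intervalIntegral_of_continuous {𝕜 E : Type*} [RCLike 𝕜]
    [NormedAddCommGroup E] [NormedSpace ℝ E] [NormedSpace 𝕜 E] {μ : Measure ℝ}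
    [IsLocallyFiniteMeasure μ] {F F' : 𝕜 → ℝ → E} (hF : ∀ x, Continuous (F x))
    (hF' : Continuous (Function.uncurry F'))
    (hderiv : ∀ x t, HasDerivAt (fun y ↦ F y t) (F' x t) x) (a b : ℝ) (x : 𝕜) :
    HasDerivAt (fun y ↦ ∫ t in a..b, F y t ∂μ) (∫ t in a..b, F' x t ∂μ) x := by
  obtain ⟨C, hC⟩ := ((isCompact_closedBall x 1).prod isCompact_uIcc).exists_bound_of_continuousOn
    (hF'.continuousOn (s := Metric.closedBall x 1 ×ˢ [[a, b]]))
  exact (hasDerivAt_integral_of_dominated_loc_of_deriv_le (bound := fun _ ↦ C)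
    (Metric.closedBall_mem_nhds x one_pos)
    (.of_forall fun y ↦ (hF y).aestronglyMeasurable) ((hF x).intervalIntegrable a b)
    (hF'.uncurry_left x).aestronglyMeasurable
    (.of_forall fun t ht y hy ↦ hC (y, t) ⟨hy, uIoc_subset_uIcc ht⟩)
    intervalIntegrable_const (.of_forall fun t _ y _ ↦ hderiv y t)).2

theorem integral_exp_mul_cos_mul_deriv {u u' : ℝ → ℝ}
    (hu : ∀ θ ∈ [[0, π]], HasDerivAt u (u' θ) θ) (hu' : IntervalIntegrable u' volume 0 π)
    (hu_zero : u 0 = 0) (hu_pi : u π = 0) (z : ℝ) :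
    ∫ θ in 0..π, exp (z * cos θ) * u' θ = z * ∫ θ in 0..π, exp (z * cos θ) * (sin θ * u θ) := by
  have hexp (θ : ℝ) : HasDerivAt (fun φ ↦ exp (z * cos φ)) (exp (z * cos θ) * (z * -sin θ)) θ :=
    ((hasDerivAt_cos θ).const_mul z).exp
  rw [integral_mul_deriv_eq_deriv_mul (fun θ _ ↦ hexp θ) hu
      (Continuous.intervalIntegrable (by fun_prop) _ _) hu',
    hu_zero, hu_pi, mul_zero, mul_zero, sub_zero, zero_sub, ← intervalIntegral.integral_neg,
    ← intervalIntegral.integral_const_mul]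
  congr! 2
  ring

/-- The integral `∫_0^π e^{z cos θ} sin^p θ dθ` of the Poisson representation of the modified
Bessel function of order `p / 2`: for `p > -1` and `z > 0` it equals
`√π Γ((p + 1) / 2) (2 / z)^{p / 2} I_{p/2}(z)`. -/
noncomputable def besselIntegral (p z : ℝ) : ℝ :=
  ∫ θ in 0..π, exp (z * cos θ) * sin θ ^ p

theorem integral_exp_mul_one_sub_sq_rpow (p z : ℝ) :
    ∫ t in (-1 : ℝ)..1, exp (z * t) * (1 - t ^ 2) ^ ((p - 1) / 2) = besselIntegral p z := by
  calc
    _ = ∫ t in (-1 : ℝ)..1, exp (z * t) * (1 - t ^ 2) ^ (p / 2) * √(1 - t ^ 2)⁻¹ := by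
      refine intervalIntegral.integral_congr_uIoo fun t ht ↦ ?_
      rw [uIoo_of_le (by norm_num)] at ht
      have ht_pos : 0 < 1 - t ^ 2 := by nlinarith [ht.1, ht.2]
      rw [sqrt_eq_rpow, inv_rpow ht_pos.le, ← rpow_neg ht_pos.le, mul_assoc, ← rpow_add ht_pos]
      ring_nf
    _ = ∫ θ in 0..π, exp (z * cos θ) * (1 - cos θ ^ 2) ^ (p / 2) := by
      rw [← Polynomial.Chebyshev.integral_measureT,
        Polynomial.Chebyshev.integral_measureT_eq_integral_cos]
    _ = besselIntegral p z := by
      refine intervalIntegral.integral_congr fun θ hθ ↦ ?_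
      rw [uIcc_of_le pi_pos.le] at hθ
      rw [← sin_sq, ← rpow_natCast_mul (sin_nonneg_of_mem_Icc hθ)]
      norm_num [mul_div_cancel₀]

theorem B0_eq_besselIntegral (z : ℝ) : B0 z = besselIntegral 0 z := by
  rw [← integral_exp_mul_one_sub_sq_rpow, B0]
  norm_num

theorem B1_eq_besselIntegral (z : ℝ) : B1 z = besselIntegral 2 z := by
  rw [← integral_exp_mul_one_sub_sq_rpow, B1]
  norm_num [sqrt_eq_rpow]

theorem besselIntegral_neg (p z : ℝ) : besselIntegral p (-z) = besselIntegral p z := by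
  simpa [besselIntegral] using
    (intervalIntegral.integral_comp_sub_left (a := 0) (b := π)
      (fun θ ↦ exp (z * cos θ) * sin θ ^ p) π)

theorem continuous_sin_rpow {p : ℝ} (hp : 0 ≤ p) : Continuous fun θ ↦ sin θ ^ p :=
  continuous_sin.rpow_const fun _ ↦ .inr hp

theorem sin_rpow_add_one {p : ℝ} (hp : 0 ≤ p) {θ : ℝ} (hθ : θ ∈ [[0, π]]) :
    sin θ ^ (p + 1) = sin θ ^ p * sin θ :=
  rpow_add_one' (sin_nonneg_of_mem_Icc (uIcc_of_le pi_pos.le ▸ hθ)) (by positivity)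

theorem sin_rpow_add_two {p : ℝ} (hp : 0 ≤ p) {θ : ℝ} (hθ : θ ∈ [[0, π]]) :
    sin θ ^ (p + 2) = sin θ ^ p * sin θ ^ 2 :=
  rpow_add_natCast' (sin_nonneg_of_mem_Icc (uIcc_of_le pi_pos.le ▸ hθ)) (by positivity)

theorem hasDerivAt_sin_rpow_add_one {p : ℝ} (hp : 0 ≤ p) (θ : ℝ) :
    HasDerivAt (fun φ ↦ sin φ ^ (p + 1)) ((p + 1) * (cos θ * sin θ ^ p)) θ := by
  convert (hasDerivAt_sin θ).rpow_const (p := p + 1) (.inr (by linarith)) using 1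
  rw [add_sub_cancel_right]
  ring

theorem integral_exp_mul_cos_mul_sin_rpow {p : ℝ} (hp : 0 ≤ p) (z : ℝ) :
    ∫ θ in 0..π, exp (z * cos θ) * (cos θ * sin θ ^ p) =
      z * besselIntegral (p + 2) z / (p + 1) := by
  have := continuous_sin_rpow hp
  have hpow : ∫ θ in 0..π, exp (z * cos θ) * (sin θ * sin θ ^ (p + 1)) =
      besselIntegral (p + 2) z := by
    refine intervalIntegral.integral_congr fun θ hθ ↦ ?_
    rw [sin_rpow_add_two hp hθ, sin_rpow_add_one hp hθ]
    ring
  have hzero : (0 : ℝ) ^ (p + 1) = 0 := zero_rpow (by positivity)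
  have hibp := integral_exp_mul_cos_mul_deriv (fun θ _ ↦ hasDerivAt_sin_rpow_add_one hp θ)
    (Continuous.intervalIntegrable (by fun_prop) _ _)
    (by simp [hzero]) (by simp [hzero]) z
  rw [hpow] at hibp
  rw [← hibp, ← intervalIntegral.integral_div]
  congr! 2
  field_simp

theorem besselIntegral_pos {p : ℝ} (hp : 0 ≤ p) (z : ℝ) : 0 < besselIntegral p z := by
  have := continuous_sin_rpow hp
  refine intervalIntegral.intervalIntegral_pos_of_pos_on
    (Continuous.intervalIntegrable (by fun_prop) _ _) (fun θ hθ ↦ ?_) pi_pos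
  have := sin_pos_of_mem_Ioo hθ
  positivity

theorem hasDerivAt_besselIntegral {p : ℝ} (hp : 0 ≤ p) (z : ℝ) :
    HasDerivAt (besselIntegral p) (z * besselIntegral (p + 2) z / (p + 1)) z := by
  have := continuous_sin_rpow hp
  rw [← integral_exp_mul_cos_mul_sin_rpow hp]
  refine hasDerivAt_intervalIntegral_of_continuous
    (F' := fun x θ ↦ exp (x * cos θ) * (cos θ * sin θ ^ p))
    (by fun_prop) (by fun_prop) (fun x θ ↦ ?_) 0 π z
  convert! ((hasDerivAt_mul_const (cos θ)).exp.mul_const (sin θ ^ p)) using 1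
  ring

theorem besselIntegral_recurrence {p : ℝ} (hp : 0 ≤ p) (z : ℝ) :
    (p + 1) * besselIntegral p z =
      (p + 2) * besselIntegral (p + 2) z + z ^ 2 * besselIntegral (p + 4) z / (p + 3) := by
  have := continuous_sin_rpow hp
  have := continuous_sin_rpow (p := p + 1) (by linarith)
  have := continuous_sin_rpow (p := p + 2) (by linarith)
  have hzero : (0 : ℝ) ^ (p + 1) = 0 := zero_rpow (by positivity)
  have hibp := integral_exp_mul_cos_mul_deriv
    (fun θ _ ↦ (hasDerivAt_cos θ).mul (hasDerivAt_sin_rpow_add_one hp θ))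
    (Continuous.intervalIntegrable (by fun_prop) _ _)
    (by simp [hzero]) (by simp [hzero]) z
  have hleft : ∫ θ in 0..π, exp (z * cos θ) *
      (-sin θ * sin θ ^ (p + 1) + cos θ * ((p + 1) * (cos θ * sin θ ^ p))) =
      (p + 1) * besselIntegral p z - (p + 2) * besselIntegral (p + 2) z := by
    simp only [besselIntegral, ← intervalIntegral.integral_const_mul]
    rw [← intervalIntegral.integral_sub (Continuous.intervalIntegrable (by fun_prop) _ _)
      (Continuous.intervalIntegrable (by fun_prop) _ _)]
    refine intervalIntegral.integral_congr fun θ hθ ↦ ?_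
    rw [sin_rpow_add_two hp hθ, sin_rpow_add_one hp hθ]
    linear_combination (p + 1) * exp (z * cos θ) * sin θ ^ p * sin_sq_add_cos_sq θ
  have hright : ∫ θ in 0..π, exp (z * cos θ) * (sin θ * (cos θ * sin θ ^ (p + 1))) =
      z * besselIntegral (p + 4) z / (p + 3) := by
    calc
      _ = ∫ θ in 0..π, exp (z * cos θ) * (cos θ * sin θ ^ (p + 2)) := by
        refine intervalIntegral.integral_congr fun θ hθ ↦ ?_
        rw [sin_rpow_add_two hp hθ, sin_rpow_add_one hp hθ]
        ring
      _ = z * besselIntegral (p + 4) z / (p + 3) := by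
        rw [integral_exp_mul_cos_mul_sin_rpow (by linarith)]
        ring_nf
  linear_combination hleft.symm.trans hibp + z * hright

/-- The difference of the two sides of the Bessel inequality for the order `p / 2`. -/
noncomputable def besselGap (p z : ℝ) : ℝ :=
  ((p + 1) * besselIntegral p z) ^ 2 - (z ^ 2 + (p + 2) ^ 2) * besselIntegral (p + 2) z ^ 2

theorem besselGap_neg (p z : ℝ) : besselGap p (-z) = besselGap p z := by
  simp only [besselGap, besselIntegral_neg, neg_sq]

theorem besselGap_zero {p : ℝ} (hp : 0 ≤ p) : besselGap p 0 = 0 := by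
  rw [besselGap, besselIntegral_recurrence hp]
  ring

theorem hasDerivAt_besselGap {p : ℝ} (hp : 0 ≤ p) (z : ℝ) :
    HasDerivAt (besselGap p)
      (2 * z * besselIntegral (p + 2) z / (p + 3) *
        (p * besselIntegral (p + 4) z +
          (p + 1) * z ^ 2 * besselIntegral (p + 6) z / (p + 5))) z := by
  have hS₀ := hasDerivAt_besselIntegral hp z
  have hS₂ : HasDerivAt (besselIntegral (p + 2)) (z * besselIntegral (p + 4) z / (p + 3)) z := by
    convert hasDerivAt_besselIntegral (p := p + 2) (by linarith) z using 2 <;> norm_num [add_assoc]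
  have hrec₀ := besselIntegral_recurrence hp z
  have hrec₂ : (p + 3) * besselIntegral (p + 2) z =
      (p + 4) * besselIntegral (p + 4) z + z ^ 2 * besselIntegral (p + 6) z / (p + 5) := by
    convert besselIntegral_recurrence (p := p + 2) (by linarith) z using 2 <;> norm_num [add_assoc]
  have hfactor : p * besselIntegral (p + 4) z +
      (p + 1) * z ^ 2 * besselIntegral (p + 6) z / (p + 5) =
      (p + 3) * ((p + 1) * besselIntegral p z - besselIntegral (p + 2) z) -
        (z ^ 2 + (p + 2) ^ 2) * besselIntegral (p + 4) z := by
    field_simp at hrec₀ hrec₂ ⊢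
    linear_combination -(p + 5) * hrec₀ - (p + 1) * hrec₂
  have hgap := ((hS₀.const_mul (p + 1)).fun_pow 2).fun_sub
    (((hasDerivAt_pow 2 z).add_const ((p + 2) ^ 2)).fun_mul (hS₂.fun_pow 2))
  refine hgap.congr_deriv ?_
  rw [hfactor]
  field_simp
  ring

theorem strictMonoOn_besselGap {p : ℝ} (hp : 0 ≤ p) : StrictMonoOn (besselGap p) (Ici 0) := by
  refine strictMonoOn_of_deriv_pos (convex_Ici 0)
    (fun z _ ↦ (hasDerivAt_besselGap hp z).continuousAt.continuousWithinAt) fun z hz ↦ ?_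
  rw [interior_Ici, mem_Ioi] at hz
  rw [(hasDerivAt_besselGap hp z).deriv]
  have hS₂ := besselIntegral_pos (p := p + 2) (by linarith) z
  have hS₄ := besselIntegral_pos (p := p + 4) (by linarith) z
  have hS₆ := besselIntegral_pos (p := p + 6) (by linarith) z
  positivity

theorem besselGap_pos {p : ℝ} (hp : 0 ≤ p) {z : ℝ} (hz : z ≠ 0) : 0 < besselGap p z := by
  have hpos : 0 < besselGap p |z| := by
    simpa only [besselGap_zero hp] using
      strictMonoOn_besselGap hp self_mem_Ici (abs_nonneg z) (abs_pos.2 hz)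
  rcases abs_choice z with h | h <;> simpa only [h, besselGap_neg] using hpos

/-- For `z > 0` and `ν = p / 2` this says `(I_ν(z) / I_{ν+1}(z))² > 1 + 4 (ν + 1)² / z²`. -/
theorem bessel_ineq_general {p : ℝ} (hp : 0 ≤ p) {z : ℝ} (hz : z ≠ 0) :
    (z ^ 2 + (p + 2) ^ 2) * besselIntegral (p + 2) z ^ 2 < ((p + 1) * besselIntegral p z) ^ 2 :=
  sub_pos.1 (besselGap_pos hp hz)

/-- The Bessel inequality `(I₀(z)/I₁(z))² > 1 + 4/z²` for all `z > 0`, in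
integral form: `B₀(z)² > (z² + 4)·B₁(z)²`. -/
theorem bessel_ineq (z : ℝ) (hz : 0 < z) :
    (z ^ 2 + 4) * (B1 z) ^ 2 < (B0 z) ^ 2 := by
  rw [B0_eq_besselIntegral, B1_eq_besselIntegral]
  convert! bessel_ineq_general le_rfl hz.ne' using 2 <;> norm_num
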